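/- For all n, m ∈ ℕ, the set of matrices obtained from the generator matrices of the ZW-calculus together with the 1×1 scalar matrix (1/√2), by finitely many Kronecker products and matrix compositions, is exactly ⋃_{k∈ℕ} (1/√2)^k · M_{2^m × 2^n}(ℤ), the set of integer 2^m × 2^n matrices multiplied by a nonnegative integer power of 1/√2. -/

import Mathlib

open Complex Matrix Kronecker

/-- Kronecker product of matrices of sizes `2^a × 2^b` and `2^c × 2^d`,
reindexed as a `2^(a+c) × 2^(b+d)` matrix. -/
noncomputable def kron2 {a b c d : ℕ} (A : Matrix (Fin (2 ^ a)) (Fin (2 ^ b)) ℂ)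
    (B : Matrix (Fin (2 ^ c)) (Fin (2 ^ d)) ℂ) :
    Matrix (Fin (2 ^ (a + c))) (Fin (2 ^ (b + d))) ℂ :=
  Matrix.reindex (finProdFinEquiv.trans (finCongr (pow_add 2 a c).symm))
    (finProdFinEquiv.trans (finCongr (pow_add 2 b d).symm)) (A ⊗ₖ B)

/-- The family of matrices generated by the generator matrices of the ZW-calculus
together with the `1×1` scalar matrix `(1/√2)`, closed under Kronecker product and
matrix composition. `ZWhalf n m M` means that `M : ℂ^{2^n} → ℂ^{2^m}` is representable. -/
inductive ZWhalf : (n m : ℕ) → Matrix (Fin (2 ^ m)) (Fin (2 ^ n)) ℂ → Prop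
  | empty : ZWhalf 0 0 (1 : Matrix (Fin (2 ^ 0)) (Fin (2 ^ 0)) ℂ)
  | wire : ZWhalf 1 1 (1 : Matrix (Fin (2 ^ 1)) (Fin (2 ^ 1)) ℂ)
  | swap : ZWhalf 2 2 !![1, 0, 0, 0; 0, 0, 1, 0; 0, 1, 0, 0; 0, 0, 0, 1]
  | crossing : ZWhalf 2 2 !![1, 0, 0, 0; 0, 0, 1, 0; 0, 1, 0, 0; 0, 0, 0, -1]
  | cap : ZWhalf 0 2 !![1; 0; 0; 1]
  | cup : ZWhalf 2 0 !![1, 0, 0, 1]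
  | black11 : ZWhalf 1 1 !![0, 1; 1, 0]
  | black12 : ZWhalf 1 2 !![0, 1; 1, 0; 1, 0; 0, 0]
  | white11 : ZWhalf 1 1 !![1, 0; 0, -1]
  | white21 : ZWhalf 2 1 !![1, 0, 0, 0; 0, 0, 0, -1]
  | invSqrtTwo : ZWhalf 0 0 (Matrix.of fun _ _ => ((Real.sqrt 2 : ℝ) : ℂ)⁻¹)
  | kron {n₁ m₁ n₂ m₂ : ℕ} {A : Matrix (Fin (2 ^ m₁)) (Fin (2 ^ n₁)) ℂ}
      {B : Matrix (Fin (2 ^ m₂)) (Fin (2 ^ n₂)) ℂ} :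
      ZWhalf n₁ m₁ A → ZWhalf n₂ m₂ B → ZWhalf (n₁ + n₂) (m₁ + m₂) (kron2 A B)
  | comp {a b c : ℕ} {A : Matrix (Fin (2 ^ c)) (Fin (2 ^ b)) ℂ}
      {B : Matrix (Fin (2 ^ b)) (Fin (2 ^ a)) ℂ} :
      ZWhalf b c A → ZWhalf a b B → ZWhalf a c (A * B)

/-!
Put `N = |0⟩⟨1|`. Since `N² = 0`, the shears `1 + V ⊗ N` compose by adding the integer matrices
`V`, and conjugation by the Pauli matrix `Z` negates `V`; so the `V` with representable shear form
an additive group. This group is stable under `V ↦ V ⊗ 1` and, by conjugation with a controlled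
shear, under `V ↦ V ⊗ N`. As `N|1⟩ = |0⟩`, induction on the number of qubits shows that its elements
take `|1⋯1⟩` to every integer vector. They are themselves representable, because `V` is
`(1 ⊗ ⟨0|)(1 + V ⊗ N)(1 ⊗ |1⟩)`; hence every integer column is representable, and bending wires
turns columns into arbitrary integer matrices. Powers of `1/√2` are scalar diagrams.

Conversely, the matrices `(1/√2)^k • A` with `A` integral contain the generators and are closed
under products and Kronecker products.
-/

/-- Identifies `ι` with the computational basis of `n` qubits. The numbering of a product is the
one used by `kron2`, the left factor being the most significant. -/
class Register (ι : Type*) (n : outParam ℕ) where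
  /-- The numbering of the basis. -/
  equiv : ι ≃ Fin (2 ^ n)

namespace Register

variable {ι κ μ : Type*} {a b c : ℕ} [Register ι a] [Register κ b] [Register μ c]

instance : Register Unit 0 := ⟨Equiv.ofUnique Unit (Fin 1)⟩

instance : Register (Fin 2) 1 := ⟨Equiv.refl _⟩

instance : Register (ι × κ) (a + b) :=
  ⟨(equiv.prodCongr equiv).trans (finProdFinEquiv.trans (finCongr (pow_add 2 a b).symm))⟩

/-- Bijections of registers that preserve the numbering: they only regroup wires. -/
class IsRegrouping (e : ι ≃ κ) : Prop where
  val_equiv_apply : ∀ x, (equiv (e x) : ℕ) = equiv x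

theorem val_equiv_prod (x : ι × κ) : (equiv x : ℕ) = equiv x.2 + 2 ^ b * equiv x.1 := rfl

instance : IsRegrouping (Equiv.refl ι) := ⟨fun _ => rfl⟩

instance (e : ι ≃ κ) [IsRegrouping e] : IsRegrouping e.symm :=
  ⟨fun x => by simpa using (IsRegrouping.val_equiv_apply (e := e) (e.symm x)).symm⟩

instance : IsRegrouping (Equiv.punitProd ι) :=
  ⟨fun x => by simp [val_equiv_prod]⟩

instance : IsRegrouping (Equiv.prodPUnit ι) :=
  ⟨fun x => by rw [val_equiv_prod x]; simp⟩

instance : IsRegrouping (Equiv.prodAssoc ι κ μ) :=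
  ⟨fun x => by simp only [Equiv.prodAssoc_apply, val_equiv_prod]; ring⟩

theorem width_eq_of_equiv (e : ι ≃ κ) : a = b := by
  have := Fintype.card_congr ((equiv.symm.trans e).trans equiv : Fin (2 ^ a) ≃ Fin (2 ^ b))
  simpa using this

end Register

open Register

/-- The integer matrix `A`, its rows and columns numbered by the registers, is representable. -/
def Representable {ι κ : Type*} {m n : ℕ} [Register ι m] [Register κ n] (A : Matrix ι κ ℤ) :
    Prop :=
  ZWhalf n m ((A.map fun z => (z : ℂ)).reindex equiv equiv)

namespace Representable

variable {ι κ μ ι' κ' : Type*} {a b c a' b' : ℕ}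
variable [Register ι a] [Register κ b] [Register μ c] [Register ι' a'] [Register κ' b']

theorem kron {A : Matrix ι κ ℤ} {B : Matrix ι' κ' ℤ} (hA : Representable A)
    (hB : Representable B) : Representable (A ⊗ₖ B) := by
  unfold Representable
  convert ZWhalf.kron hA hB
  ext i j
  simp [kron2, Register.equiv]

theorem mul [Fintype κ] {A : Matrix ι κ ℤ} {B : Matrix κ μ ℤ} (hA : Representable A)
    (hB : Representable B) : Representable (A * B) := by
  unfold Representable
  convert ZWhalf.comp hA hB
  ext i j
  simp [Matrix.mul_apply, ← Equiv.sum_comp (equiv : κ ≃ Fin (2 ^ b))]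

theorem reindex {A : Matrix ι κ ℤ} (hA : Representable A) (e : ι ≃ ι') (f : κ ≃ κ')
    [IsRegrouping e] [IsRegrouping f] : Representable (A.reindex e f) := by
  obtain rfl := width_eq_of_equiv e
  obtain rfl := width_eq_of_equiv f
  have he : e.trans equiv = equiv := Equiv.ext fun x => Fin.ext (IsRegrouping.val_equiv_apply x)
  have hf : f.trans equiv = equiv := Equiv.ext fun x => Fin.ext (IsRegrouping.val_equiv_apply x)
  unfold Representable at hA ⊢
  rwa [← he, ← hf] at hA

theorem of_apply_eq {A : Matrix ι κ ℤ} {M : Matrix (Fin (2 ^ a)) (Fin (2 ^ b)) ℂ}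
    (hM : ZWhalf b a M) (h : ∀ i j, (A (equiv.symm i) (equiv.symm j) : ℂ) = M i j) :
    Representable A := by
  rwa [← Matrix.ext (M := (A.map fun z => (z : ℂ)).reindex equiv equiv) h] at hM

end Representable

@[simp]
theorem kron2_one_one (a b : ℕ) :
    kron2 (1 : Matrix (Fin (2 ^ a)) (Fin (2 ^ a)) ℂ) (1 : Matrix (Fin (2 ^ b)) (Fin (2 ^ b)) ℂ) =
      1 := by
  rw [kron2, one_kronecker_one, reindex_apply, submatrix_one_equiv]

theorem zwhalf_one : ∀ n, ZWhalf n n 1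
  | 0 => .empty
  | n + 1 => by simpa using (zwhalf_one n).kron .wire

theorem representable_one {ι : Type*} {n : ℕ} [Register ι n] [DecidableEq ι] :
    Representable (1 : Matrix ι ι ℤ) := by
  simpa [Representable] using zwhalf_one n

/-- The 2-to-1 white node `|00⟩ ↦ |0⟩`, `|11⟩ ↦ -|1⟩`. -/
def whiteNode : Matrix (Fin 2) (Fin 2 × Fin 2) ℤ :=
  of fun i x => if x = (i, i) then (-1) ^ (i : ℕ) else 0

/-- The 1-to-2 black node, whose entry is `1` when exactly one of its three wires carries `1`. -/
def blackNode : Matrix (Fin 2 × Fin 2) (Fin 2) ℤ :=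
  of fun x i => if (x.1 : ℕ) + x.2 + i = 1 then 1 else 0

/-- The Pauli matrix `Z`. -/
def pauliZ : Matrix (Fin 2) (Fin 2) ℤ := !![1, 0; 0, -1]

/-- The Pauli matrix `X`. -/
def pauliX : Matrix (Fin 2) (Fin 2) ℤ := !![0, 1; 1, 0]

/-- The basis row vector `⟨i|`. -/
def bra (i : Fin 2) : Matrix Unit (Fin 2) ℤ := Matrix.single () i 1

/-- The basis column vector `|i⟩`. -/
def ket (i : Fin 2) : Matrix (Fin 2) Unit ℤ := Matrix.single i () 1

/-- The row vector `⟨00| + ⟨11|`. -/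
def bellBra : Matrix Unit (Fin 2 × Fin 2) ℤ := of fun _ x => if x.1 = x.2 then 1 else 0

/-- The column vector `|00⟩ + |11⟩`. -/
def bellKet : Matrix (Fin 2 × Fin 2) Unit ℤ := of fun x _ => if x.1 = x.2 then 1 else 0

/-- The matrix exchanging two qubits. -/
def swapGate : Matrix (Fin 2 × Fin 2) (Fin 2 × Fin 2) ℤ :=
  of fun x y => if x = y.swap then 1 else 0

/-- The matrix `|i⟩ ↦ |ii⟩`. -/
def copyGate : Matrix (Fin 2 × Fin 2) (Fin 2) ℤ := of fun x i => if x = (i, i) then 1 else 0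

/-- The matrix `|0⟩ ↦ |00⟩`, `|1⟩ ↦ |01⟩ + |10⟩`, which sends `|1⟩` to the W state. -/
def wGate : Matrix (Fin 2 × Fin 2) (Fin 2) ℤ :=
  of fun x i => if (x.1 : ℕ) + x.2 = i then 1 else 0

/-- The matrix `|0⟩⟨1|`. -/
def lowering : Matrix (Fin 2) (Fin 2) ℤ := !![0, 1; 0, 0]

/-- The shear `1 + |0⟩⟨1|` of the second qubit, controlled by the first. -/
def controlledShear : Matrix (Fin 2 × Fin 2) (Fin 2 × Fin 2) ℤ :=
  1 + Matrix.single 1 1 1 ⊗ₖ lowering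

theorem representable_swapGate : Representable swapGate :=
  .of_apply_eq .swap fun i j => by
    fin_cases i <;> fin_cases j <;> first | exact Int.cast_zero | exact Int.cast_one

theorem representable_bellKet : Representable bellKet :=
  .of_apply_eq .cap fun i j => by
    fin_cases i <;> fin_cases j <;> first | exact Int.cast_zero | exact Int.cast_one

theorem representable_bellBra : Representable bellBra :=
  .of_apply_eq .cup fun i j => by
    fin_cases i; fin_cases j <;> first | exact Int.cast_zero | exact Int.cast_one

theorem representable_pauliX : Representable pauliX :=
  .of_apply_eq .black11 fun i j => by
    fin_cases i <;> fin_cases j <;> first | exact Int.cast_zero | exact Int.cast_one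

theorem representable_blackNode : Representable blackNode :=
  .of_apply_eq .black12 fun i j => by
    fin_cases i <;> fin_cases j <;> first | exact Int.cast_zero | exact Int.cast_one

theorem intCast_neg_one : ((-1 : ℤ) : ℂ) = -1 := by simp

theorem representable_pauliZ : Representable pauliZ :=
  .of_apply_eq .white11 fun i j => by
    fin_cases i <;> fin_cases j <;>
      first | exact Int.cast_zero | exact Int.cast_one | exact intCast_neg_one

theorem representable_whiteNode : Representable whiteNode :=
  .of_apply_eq .white21 fun i j => by
    fin_cases i <;> fin_cases j <;>
      first | exact Int.cast_zero | exact Int.cast_one | exact intCast_neg_one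

theorem representable_copyGate : Representable copyGate := by
  convert (((representable_whiteNode.kron representable_one).mul
    ((representable_one.kron representable_bellKet).reindex
      (Equiv.prodAssoc _ _ _).symm (Equiv.prodPUnit _))).mul representable_pauliZ) using 1
  decide +kernel

theorem representable_wGate : Representable wGate := by
  convert representable_blackNode.mul representable_pauliX using 1
  decide +kernel

theorem representable_bra_zero : Representable (bra 0) := by
  convert representable_bellBra.mul representable_wGate using 1
  decide +kernel

theorem representable_ket_one : Representable (ket 1) := by
  have ket_zero := ((representable_bra_zero.kron representable_one).mul
    representable_bellKet).reindex (Equiv.punitProd _) (.refl _)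
  convert representable_pauliX.mul ket_zero using 1
  decide +kernel

theorem representable_one_add_lowering : Representable (1 + lowering) := by
  have discard := representable_bellBra.mul representable_copyGate
  convert ((discard.kron representable_one).mul representable_wGate).reindex
    (Equiv.punitProd _) (.refl _) using 1
  decide +kernel

theorem representable_controlledShear : Representable controlledShear := by
  have hw : Representable (1 : Matrix (Fin 2) (Fin 2) ℤ) := representable_one
  have compare := representable_bellBra.mul (representable_one_add_lowering.kron hw)
  have filter := ((hw.kron compare).mul
    ((representable_copyGate.kron hw).reindex (.prodAssoc _ _ _) (.refl _))).reindex
      (.prodPUnit _) (.refl _)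
  -- `wGate` splits the target into two bits, at most one of them `1`; `filter` drops the first of
  -- them, killing the terms in which it is `1` while the control is `0`.
  convert (filter.kron hw).mul
    ((hw.kron representable_wGate).reindex (Equiv.prodAssoc _ _ _).symm (.refl _)) using 1
  decide +kernel

/-- The shear `1 + V ⊗ |0⟩⟨1|`; in block form on the last qubit, `V` is its upper right corner. -/
def blockShear {ι : Type*} [DecidableEq ι] (V : Matrix ι ι ℤ) :
    Matrix (ι × Fin 2) (ι × Fin 2) ℤ :=
  1 + V ⊗ₖ lowering

section BlockShear

variable {ι : Type*} [DecidableEq ι]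

@[simp]
theorem blockShear_zero : blockShear (0 : Matrix ι ι ℤ) = 1 := by simp [blockShear]

variable [Fintype ι]

theorem blockShear_mul_blockShear (V W : Matrix ι ι ℤ) :
    blockShear V * blockShear W = blockShear (V + W) := by
  have hNN : lowering * lowering = 0 := by decide
  simp only [blockShear, mul_add, add_mul, one_mul, mul_one, ← mul_kronecker_mul, hNN,
    kronecker_zero, add_kronecker]
  abel

theorem pauliZ_mul_blockShear_mul_pauliZ (V : Matrix ι ι ℤ) :
    ((1 : Matrix ι ι ℤ) ⊗ₖ pauliZ) * blockShear V * ((1 : Matrix ι ι ℤ) ⊗ₖ pauliZ) =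
      blockShear (-V) := by
  have hZZ : pauliZ * pauliZ = 1 := by decide
  have hZNZ : pauliZ * lowering * pauliZ = (-1 : ℤ) • lowering := by decide
  rw [← neg_one_smul ℤ V]
  simp only [blockShear, mul_add, add_mul, one_mul, mul_one, ← mul_kronecker_mul, hZZ, hZNZ,
    one_kronecker_one, kronecker_smul, smul_kronecker]

theorem conj_blockShear_kronecker_one {P Q : Matrix (Fin 2 × Fin 2) (Fin 2 × Fin 2) ℤ}
    {Y : Matrix (Fin 2) (Fin 2) ℤ} (hQP : Q * P = 1)
    (hY : Q * (lowering ⊗ₖ (1 : Matrix (Fin 2) (Fin 2) ℤ)) * P = Y ⊗ₖ lowering)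
    (V : Matrix ι ι ℤ) :
    ((1 : Matrix ι ι ℤ) ⊗ₖ Q) *
        (blockShear V ⊗ₖ (1 : Matrix (Fin 2) (Fin 2) ℤ)).reindex (.prodAssoc ι (Fin 2) (Fin 2))
          (.prodAssoc ι (Fin 2) (Fin 2)) *
        ((1 : Matrix ι ι ℤ) ⊗ₖ P) =
      (blockShear (V ⊗ₖ Y)).reindex (.prodAssoc ι (Fin 2) (Fin 2))
        (.prodAssoc ι (Fin 2) (Fin 2)) := by
  have reindex_blockShear : (blockShear V ⊗ₖ (1 : Matrix (Fin 2) (Fin 2) ℤ)).reindex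
      (.prodAssoc ι (Fin 2) (Fin 2)) (.prodAssoc ι (Fin 2) (Fin 2)) =
      1 + V ⊗ₖ (lowering ⊗ₖ 1) := by
    rw [← kronecker_assoc, blockShear, add_kronecker, one_kronecker_one]
    simp [submatrix_add]
  rw [reindex_blockShear]
  simp only [mul_add, add_mul, one_mul, mul_one, ← mul_kronecker_mul, hQP, hY,
    one_kronecker_one]
  rw [blockShear, ← kronecker_assoc]
  simp [submatrix_add]

end BlockShear

section ShearGroup

variable {ι : Type*} {n : ℕ} [Register ι n] [Fintype ι] [DecidableEq ι]

variable (ι) in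
/-- The matrices `V` with representable shear `1 + V ⊗ |0⟩⟨1|`. Since `|0⟩⟨1|` squares to zero,
composition of shears is addition of the `V`. -/
def shearGroup : AddSubgroup (Matrix ι ι ℤ) where
  carrier := {V | Representable (blockShear V)}
  zero_mem' := by simpa using representable_one
  add_mem' {V W} hV hW := by
    simpa only [Set.mem_ofPred_eq, blockShear_mul_blockShear] using hV.mul hW
  neg_mem' {V} hV := by
    have hZ : Representable ((1 : Matrix ι ι ℤ) ⊗ₖ pauliZ) :=
      representable_one.kron representable_pauliZ
    simpa only [Set.mem_ofPred_eq, pauliZ_mul_blockShear_mul_pauliZ] using (hZ.mul hV).mul hZ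

theorem mem_shearGroup {V : Matrix ι ι ℤ} : V ∈ shearGroup ι ↔ Representable (blockShear V) :=
  Iff.rfl

theorem kronecker_mem_shearGroup_of_conj {P Q : Matrix (Fin 2 × Fin 2) (Fin 2 × Fin 2) ℤ}
    {Y : Matrix (Fin 2) (Fin 2) ℤ} (hP : Representable P) (hQ : Representable Q)
    (hQP : Q * P = 1)
    (hY : Q * (lowering ⊗ₖ (1 : Matrix (Fin 2) (Fin 2) ℤ)) * P = Y ⊗ₖ lowering)
    {V : Matrix ι ι ℤ} (hV : V ∈ shearGroup ι) : V ⊗ₖ Y ∈ shearGroup (ι × Fin 2) := by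
  have hV1 : Representable (blockShear V ⊗ₖ (1 : Matrix (Fin 2) (Fin 2) ℤ)) :=
    Representable.kron hV representable_one
  have h := ((representable_one (ι := ι).kron hQ).mul
    (hV1.reindex (.prodAssoc _ _ _) (.prodAssoc _ _ _))).mul (representable_one (ι := ι).kron hP)
  rw [conj_blockShear_kronecker_one hQP hY] at h
  simpa [mem_shearGroup] using h.reindex (Equiv.prodAssoc _ _ _).symm (Equiv.prodAssoc _ _ _).symm

theorem kronecker_one_mem_shearGroup {V : Matrix ι ι ℤ} (hV : V ∈ shearGroup ι) :
    V ⊗ₖ (1 : Matrix (Fin 2) (Fin 2) ℤ) ∈ shearGroup (ι × Fin 2) :=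
  kronecker_mem_shearGroup_of_conj representable_swapGate representable_swapGate
    (by decide +kernel) (by decide +kernel) hV

theorem kronecker_lowering_mem_shearGroup {V : Matrix ι ι ℤ} (hV : V ∈ shearGroup ι) :
    V ⊗ₖ lowering ∈ shearGroup (ι × Fin 2) := by
  have hZ : Representable ((1 : Matrix (Fin 2) (Fin 2) ℤ) ⊗ₖ pauliZ) :=
    representable_one.kron representable_pauliZ
  have hC := representable_controlledShear
  -- The controlled shear `C` has inverse `(1 ⊗ Z) C (1 ⊗ Z)`, and `C⁻¹ (N ⊗ 1) C = N ⊗ (1 + N)`.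
  have hshear : V ⊗ₖ (1 + lowering) ∈ shearGroup (ι × Fin 2) :=
    kronecker_mem_shearGroup_of_conj (hC.mul representable_swapGate)
      (representable_swapGate.mul ((hZ.mul hC).mul hZ)) (by decide +kernel) (by decide +kernel) hV
  simpa [kronecker_add] using sub_mem hshear (kronecker_one_mem_shearGroup hV)

theorem representable_of_mem_shearGroup {V : Matrix ι ι ℤ} (hV : V ∈ shearGroup ι) :
    Representable V := by
  have hcorner : ((1 : Matrix ι ι ℤ) ⊗ₖ bra 0) * blockShear V * ((1 : Matrix ι ι ℤ) ⊗ₖ ket 1) =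
      V ⊗ₖ (1 : Matrix Unit Unit ℤ) := by
    have h01 : bra 0 * ket 1 = 0 := by decide
    have hN : bra 0 * lowering * ket 1 = 1 := by decide
    simp only [blockShear, Matrix.mul_add, Matrix.add_mul, Matrix.mul_one, one_mul,
      ← mul_kronecker_mul, h01, hN, kronecker_zero, zero_add]
  have h := ((representable_one (ι := ι).kron representable_bra_zero).mul hV).mul
    (representable_one (ι := ι).kron representable_ket_one)
  rw [hcorner] at h
  convert h.reindex (.prodPUnit ι) (.prodPUnit ι) using 1
  ext i j
  simp

end ShearGroup

/-- The register of `n` qubits, built one qubit at a time. -/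
def Qubits : ℕ → Type
  | 0 => Unit
  | n + 1 => Qubits n × Fin 2

namespace Qubits

instance instFintype : ∀ n, Fintype (Qubits n)
  | 0 => inferInstanceAs (Fintype Unit)
  | n + 1 => letI := instFintype n; inferInstanceAs (Fintype (Qubits n × Fin 2))

instance instDecidableEq : ∀ n, DecidableEq (Qubits n)
  | 0 => inferInstanceAs (DecidableEq Unit)
  | n + 1 => letI := instDecidableEq n; inferInstanceAs (DecidableEq (Qubits n × Fin 2))

instance instRegister : ∀ n, Register (Qubits n) n
  | 0 => inferInstanceAs (Register Unit 0)
  | n + 1 => letI := instRegister n; inferInstanceAs (Register (Qubits n × Fin 2) (n + 1))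

end Qubits

section CyclicVector

variable {ι : Type*} {n : ℕ} [Register ι n] [Fintype ι] [DecidableEq ι]

/-- A representable column vector from which the shear group reaches every integer vector. -/
structure IsCyclicVector (u : Matrix ι Unit ℤ) : Prop where
  representable : Representable u
  exists_mul_eq : ∀ v, ∃ V ∈ shearGroup ι, V * u = v

theorem isCyclicVector_one : IsCyclicVector (1 : Matrix Unit Unit ℤ) where
  representable := representable_one
  exists_mul_eq v := by
    have one_mem : (1 : Matrix Unit Unit ℤ) ∈ shearGroup Unit := by
      rw [mem_shearGroup]
      convert (representable_one_add_lowering.reindex (Equiv.punitProd (Fin 2)).symm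
        (Equiv.punitProd (Fin 2)).symm) using 1
      decide +kernel
    refine ⟨v () () • 1, zsmul_mem one_mem _, ?_⟩
    rw [Matrix.mul_one]
    ext
    simp [-zsmul_eq_mul]

theorem IsCyclicVector.kronecker_ket_one {u : Matrix ι Unit ℤ} (hu : IsCyclicVector u) :
    IsCyclicVector ((u ⊗ₖ ket 1).reindex (.refl _) (.prodPUnit Unit)) where
  representable :=
    (hu.representable.kron representable_ket_one).reindex (.refl _) (.prodPUnit Unit)
  exists_mul_eq v := by
    obtain ⟨V₀, hV₀, h₀⟩ := hu.exists_mul_eq (of fun x => v (x, 0))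
    obtain ⟨V₁, hV₁, h₁⟩ := hu.exists_mul_eq (of fun x => v (x, 1))
    refine ⟨V₀ ⊗ₖ lowering + V₁ ⊗ₖ 1,
      add_mem (kronecker_lowering_mem_shearGroup hV₀) (kronecker_one_mem_shearGroup hV₁), ?_⟩
    ext ⟨x, b⟩ j
    have h₀x := congrFun₂ h₀ x j
    have h₁x := congrFun₂ h₁ x j
    fin_cases b
    · simpa [mul_apply, Fintype.sum_prod_type, lowering, ket, one_apply] using h₀x
    · simpa [mul_apply, Fintype.sum_prod_type, lowering, ket, one_apply] using h₁x

end CyclicVector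

theorem exists_isCyclicVector : ∀ n, ∃ u : Matrix (Qubits n) Unit ℤ, IsCyclicVector u
  | 0 => ⟨_, isCyclicVector_one⟩
  | n + 1 =>
    have ⟨_, hu⟩ := exists_isCyclicVector n
    ⟨_, hu.kronecker_ket_one⟩

theorem representable_column {n : ℕ} (v : Matrix (Qubits n) Unit ℤ) : Representable v := by
  obtain ⟨u, hu⟩ := exists_isCyclicVector n
  obtain ⟨V, hV, rfl⟩ := hu.exists_mul_eq v
  exact (representable_of_mem_shearGroup hV).mul hu.representable

theorem Representable.bend_last_wire {ι κ : Type*} {m n : ℕ} [Register ι m] [Register κ n]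
    {A : Matrix ι (κ × Fin 2) ℤ}
    (hA : Representable (of fun x j => A x.1 (j, x.2) : Matrix (ι × Fin 2) κ ℤ)) :
    Representable A := by
  classical
  let := Fintype.ofEquiv _ (equiv (ι := ι)).symm
  have hwire : Representable (1 : Matrix (Fin 2) (Fin 2) ℤ) := representable_one
  have bent := (representable_one (ι := ι).kron representable_bellBra).mul
    ((hA.kron hwire).reindex (.prodAssoc _ _ _) (.refl _))
  convert bent.reindex (.prodPUnit ι) (.refl _) using 1
  ext i ⟨j, b⟩
  simp [mul_apply, Fintype.sum_prod_type, bellBra, one_apply]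

theorem representable_qubits : ∀ {m} n (A : Matrix (Qubits m) (Qubits n) ℤ), Representable A
  | _, 0, A => representable_column A
  | m, n + 1, _ =>
    Representable.bend_last_wire (κ := Qubits n) (representable_qubits (m := m + 1) n _)

theorem zwhalf_map_intCast {m n : ℕ} (A : Matrix (Fin (2 ^ m)) (Fin (2 ^ n)) ℤ) :
    ZWhalf n m (A.map fun z => (z : ℂ)) := by
  have h := representable_qubits n (A.submatrix (equiv (ι := Qubits m)) equiv)
  rw [Representable, ← submatrix_map] at h
  simpa using h

theorem kron2_of_const {m n : ℕ} (M : Matrix (Fin (2 ^ m)) (Fin (2 ^ n)) ℂ) (c : ℂ) :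
    kron2 M (of fun _ _ => c : Matrix (Fin (2 ^ 0)) (Fin (2 ^ 0)) ℂ) = c • M := by
  ext i j
  have index_eq (a : ℕ) (i : Fin (2 ^ a)) :
      (finProdFinEquiv.trans (finCongr (pow_add 2 a 0).symm)).symm i = (i, 0) := by
    rw [Equiv.symm_apply_eq]
    ext
    simp
  rw [kron2, reindex_apply, submatrix_apply, index_eq m i, index_eq n j]
  simp [mul_comm]

theorem ZWhalf.inv_sqrt_two_pow_smul {m n : ℕ} {M : Matrix (Fin (2 ^ m)) (Fin (2 ^ n)) ℂ}
    (hM : ZWhalf n m M) : ∀ k : ℕ, ZWhalf n m ((((√2 : ℝ) : ℂ)⁻¹ ^ k) • M)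
  | 0 => by simpa using hM
  | k + 1 => by
    have h := (hM.inv_sqrt_two_pow_smul k).kron .invSqrtTwo
    rwa [kron2_of_const, smul_smul, ← pow_succ'] at h

/-- The matrices `(1/√2)^k • A` with `A` an integer matrix. -/
def IsDyadic {ι κ : Type*} (M : Matrix ι κ ℂ) : Prop :=
  ∃ (k : ℕ) (A : Matrix ι κ ℤ), M = (((√2 : ℝ) : ℂ)⁻¹ ^ k) • A.map fun z => (z : ℂ)

namespace IsDyadic

variable {ι κ μ ι' κ' : Type*}

theorem of_forall_mem_bot {M : Matrix ι κ ℂ} (hM : ∀ i j, M i j ∈ (⊥ : Subring ℂ)) :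
    IsDyadic M := by
  choose A hA using fun i j => Subring.mem_bot.mp (hM i j)
  refine ⟨0, of A, ?_⟩
  ext i j
  simp [hA]

theorem mul [Fintype κ] {M : Matrix ι κ ℂ} {N : Matrix κ μ ℂ} (hM : IsDyadic M)
    (hN : IsDyadic N) : IsDyadic (M * N) := by
  obtain ⟨k, A, rfl⟩ := hM
  obtain ⟨l, B, rfl⟩ := hN
  refine ⟨k + l, A * B, ?_⟩
  rw [Matrix.smul_mul, Matrix.mul_smul, smul_smul, ← pow_add]
  congr 1
  exact (Matrix.map_mul (f := Int.castRingHom ℂ)).symm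

theorem kronecker {M : Matrix ι κ ℂ} {N : Matrix ι' κ' ℂ} (hM : IsDyadic M) (hN : IsDyadic N) :
    IsDyadic (M ⊗ₖ N) := by
  obtain ⟨k, A, rfl⟩ := hM
  obtain ⟨l, B, rfl⟩ := hN
  refine ⟨k + l, A ⊗ₖ B, ?_⟩
  ext i j
  simp only [kroneckerMap_apply, Matrix.smul_apply, Matrix.map_apply, smul_eq_mul, Int.cast_mul,
    pow_add]
  ring

theorem reindex {M : Matrix ι κ ℂ} (hM : IsDyadic M) (e : ι ≃ ι') (f : κ ≃ κ') :
    IsDyadic (M.reindex e f) := by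
  obtain ⟨k, A, rfl⟩ := hM
  exact ⟨k, A.reindex e f, rfl⟩

end IsDyadic

theorem ZWhalf.isDyadic {m n : ℕ} {M : Matrix (Fin (2 ^ m)) (Fin (2 ^ n)) ℂ}
    (hM : ZWhalf n m M) : IsDyadic M := by
  induction hM with
  | empty | wire | swap | crossing | cap | cup | black11 | black12 | white11 | white21 =>
    exact .of_forall_mem_bot (by simp [Fin.forall_fin_succ, zero_mem, one_mem])
  | invSqrtTwo =>
    refine ⟨1, of fun _ _ => 1, ?_⟩
    ext
    simp
  | kron _ _ hA hB => exact (hA.kronecker hB).reindex _ _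
  | comp _ _ hA hB => exact hA.mul hB

theorem zwhalf_iff_dyadic (n m : ℕ) (M : Matrix (Fin (2 ^ m)) (Fin (2 ^ n)) ℂ) :
    ZWhalf n m M ↔ ∃ (k : ℕ) (A : Matrix (Fin (2 ^ m)) (Fin (2 ^ n)) ℤ),
      M = (((Real.sqrt 2 : ℝ) : ℂ)⁻¹ ^ k) • A.map (fun z => (z : ℂ)) := by
  constructor
  · exact ZWhalf.isDyadic
  · rintro ⟨k, A, rfl⟩
    exact (zwhalf_map_intCast A).inv_sqrt_two_pow_smul k
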